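/- arXiv:1305.6790 — 8 statements merged into one kernel-verified Lean document; each statement's English description precedes it below -/
import Mathlib

section
/- Let 1 ≤ k ≤ n and let A = (α_{ij}) ∈ Λ_n^k be a canonical matrix. Then the first row of A consists of n−k zeros followed by k ones (α_{1,1} = ⋯ = α_{1,n−k} = 0 and α_{1,n−k+1} = ⋯ = α_{1,n} = 1), and likewise the first column of A consists of n−k zeros followed by k ones (α_{1,1} = ⋯ = α_{n−k,1} = 0 and α_{n−k+1,1} = ⋯ = α_{n,1} = 1). -/
/-- `Lambda n k` : the set of `n×n` binary matrices with exactly `k` ones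
in each row and each column. -/
def Lambda (n k : ℕ) : Set (Matrix (Fin n) (Fin n) Bool) :=
  {A | (∀ i, (Finset.univ.filter fun j => A i j = true).card = k) ∧
       (∀ j, (Finset.univ.filter fun i => A i j = true).card = k)}

/-- `A ∼ B` iff `A` is obtained from `B` by permuting rows and/or columns. -/
def rcEquiv {n : ℕ} (A B : Matrix (Fin n) (Fin n) Bool) : Prop :=
  ∃ σ τ : Equiv.Perm (Fin n), ∀ i j, A i j = B (σ i) (τ j)

/-- `mu n k` : the number of equivalence classes of `Λ_n^k` under `∼`. -/
noncomputable def mu (n k : ℕ) : ℕ :=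
  Nat.card (Quot fun A B : {M : Matrix (Fin n) (Fin n) Bool // M ∈ Lambda n k} =>
    rcEquiv A.1 B.1)

/-- The natural number whose `n`-digit binary representation is row `i` of `A`. -/
def rowVal {n : ℕ} (A : Matrix (Fin n) (Fin n) Bool) (i : Fin n) : ℕ :=
  ∑ j : Fin n, if A i j = true then 2 ^ (n - 1 - (j : ℕ)) else 0

/-- A matrix is canonical when the row values of `A` and of `Aᵀ` are both
nondecreasing. -/
def IsCanonical {n : ℕ} (A : Matrix (Fin n) (Fin n) Bool) : Prop :=
  Monotone (rowVal A) ∧ Monotone (rowVal A.transpose)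

/-- The leading bit of a row is set exactly when its value is at least `2 ^ (n - 1)`. -/
lemma two_pow_le_rowVal_iff {m : ℕ} (A : Matrix (Fin (m + 1)) (Fin (m + 1)) Bool)
    (i : Fin (m + 1)) : 2 ^ m ≤ rowVal A i ↔ A i 0 = true := by
  have hgeom : ∑ j : Fin m, 2 ^ (m - 1 - (j : ℕ)) < 2 ^ m := by
    rw [Fin.sum_univ_eq_sum_range (fun j => 2 ^ (m - 1 - j)) m,
      Finset.sum_range_reflect (fun j => 2 ^ j) m]
    exact Nat.geomSum_lt le_rfl (by simp)
  have htail : (∑ j : Fin m, if A i j.succ = true then 2 ^ (m - 1 - (j : ℕ)) else 0)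
      < 2 ^ m := by
    refine lt_of_le_of_lt (Finset.sum_le_sum fun j _ => ?_) hgeom
    split_ifs <;> simp
  have hval : rowVal A i = (if A i 0 = true then 2 ^ m else 0) +
      ∑ j : Fin m, if A i j.succ = true then 2 ^ (m - 1 - (j : ℕ)) else 0 := by
    simp [rowVal, Fin.sum_univ_succ, Nat.sub_sub, Nat.add_comm]
  rw [hval]
  split_ifs with h <;> simp [h, htail]

/-- An upward closed subset of `Fin n` with `k` elements consists of the last `k` elements. -/
lemma Fin.mem_iff_sub_card_le_of_isUpperSet {n : ℕ} {S : Finset (Fin n)}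
    (hS : IsUpperSet (S : Set (Fin n))) (j : Fin n) : j ∈ S ↔ n - S.card ≤ (j : ℕ) := by
  constructor
  · intro hj
    have hsub : Finset.Ici j ⊆ S := fun a ha => hS (Finset.mem_Ici.mp ha) hj
    have hcard := Finset.card_le_card hsub
    rw [Fin.card_Ici] at hcard
    omega
  · contrapose!
    intro hj
    have hsub : S ⊆ Finset.Ioi j := fun a ha =>
      Finset.mem_Ioi.mpr (lt_of_not_ge fun haj => hj (hS haj ha))
    have hcard := Finset.card_le_card hsub
    rw [Fin.card_Ioi] at hcard
    omega

/-- If the row values are nondecreasing and the first column has `k` ones, then these are its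
last `k` entries. -/
lemma first_col_of_monotone_rowVal {m k : ℕ} {A : Matrix (Fin (m + 1)) (Fin (m + 1)) Bool}
    (hmono : Monotone (rowVal A))
    (hcard : (Finset.univ.filter fun i => A i 0 = true).card = k) (i : Fin (m + 1)) :
    A i 0 = true ↔ m + 1 - k ≤ (i : ℕ) := by
  have hS : IsUpperSet ((Finset.univ.filter fun i => A i 0 = true : Finset (Fin (m + 1))) :
      Set (Fin (m + 1))) := by
    intro a b hab ha
    simp only [Finset.coe_filter, Finset.mem_univ, true_and, Set.mem_ofPred_eq,
      ← two_pow_le_rowVal_iff] at ha ⊢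
    exact ha.trans (hmono hab)
  simpa [hcard] using Fin.mem_iff_sub_card_le_of_isUpperSet hS i

theorem first_row_col_of_canonical (n k : ℕ) (hk : 1 ≤ k) (hkn : k ≤ n)
    (A : Matrix (Fin n) (Fin n) Bool) (hA : A ∈ Lambda n k)
    (hcan : IsCanonical A) :
    (∀ j : Fin n,
      A ⟨0, Nat.lt_of_lt_of_le Nat.one_pos (hk.trans hkn)⟩ j = true ↔ n - k ≤ (j : ℕ)) ∧
    (∀ i : Fin n,
      A i ⟨0, Nat.lt_of_lt_of_le Nat.one_pos (hk.trans hkn)⟩ = true ↔ n - k ≤ (i : ℕ)) := by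
  obtain ⟨m, rfl⟩ : ∃ m, n = m + 1 := ⟨n - 1, by omega⟩
  exact ⟨first_col_of_monotone_rowVal hcan.2 (hA.1 0),
    first_col_of_monotone_rowVal hcan.1 (hA.2 0)⟩
end

section
/- Let 1 ≤ k ≤ n and let A ∈ Λ_n^k be a canonical matrix with associated row values x_1 ≤ x_2 ≤ ⋯ ≤ x_n. Then x_1 = 2^k − 1, i.e. the first row of A, read as a binary number, equals 2^k − 1. -/
/-- The bit positions (counted from the least significant) at which row `i` of `A` has a one. -/
def rowBits {n : ℕ} (A : Matrix (Fin n) (Fin n) Bool) (i : Fin n) : Finset ℕ :=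
  (Finset.univ.filter fun j => A i j = true).image fun j : Fin n => n - 1 - (j : ℕ)

theorem injective_bitPosition (n : ℕ) :
    Function.Injective fun j : Fin n => n - 1 - (j : ℕ) := by
  intro a b h
  dsimp only at h
  ext
  omega

theorem rowVal_eq_sum_rowBits {n : ℕ} (A : Matrix (Fin n) (Fin n) Bool) (i : Fin n) :
    rowVal A i = ∑ m ∈ rowBits A i, 2 ^ m := by
  rw [rowBits, Finset.sum_image (injective_bitPosition n).injOn, Finset.sum_filter, rowVal]

theorem card_rowBits {n : ℕ} (A : Matrix (Fin n) (Fin n) Bool) (i : Fin n) :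
    (rowBits A i).card = (Finset.univ.filter fun j => A i j = true).card :=
  Finset.card_image_of_injective _ (injective_bitPosition n)

theorem leading_bit_iff {n : ℕ} (A : Matrix (Fin n) (Fin n) Bool) (i : Fin n) (hn : 0 < n) :
    A i ⟨0, hn⟩ = true ↔ 2 ^ (n - 1) ≤ rowVal A i := by
  rw [rowVal_eq_sum_rowBits]
  constructor
  · intro h
    refine Finset.single_le_sum (f := fun m => 2 ^ m) (fun _ _ => Nat.zero_le _) ?_
    exact Finset.mem_image.2 ⟨⟨0, hn⟩, by simp [h], by simp⟩
  · intro h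
    by_contra hA
    refine absurd h (not_le.2 (Nat.geomSum_lt le_rfl fun m hm => ?_))
    obtain ⟨j, hj, rfl⟩ := Finset.mem_image.1 hm
    have hj0 : (j : ℕ) ≠ 0 := by
      intro h0
      obtain rfl : j = ⟨0, hn⟩ := Fin.ext h0
      exact hA (Finset.mem_filter.1 hj).2
    omega

theorem Finset.eq_range_card_of_isLowerSet {s : Finset ℕ}
    (hs : IsLowerSet (s : Set ℕ)) : s = Finset.range s.card := by
  refine Finset.eq_of_subset_of_card_le (fun m hm => ?_) (by simp)
  have hsub : Finset.range (m + 1) ⊆ s := fun l hl =>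
    hs (Nat.lt_succ_iff.1 (Finset.mem_range.1 hl)) hm
  have hcard := Finset.card_le_card hsub
  rw [Finset.card_range] at hcard
  exact Finset.mem_range.2 hcard

theorem isLowerSet_rowBits_zero {n : ℕ} (hn : 0 < n) {A : Matrix (Fin n) (Fin n) Bool}
    (hA : Monotone (rowVal A.transpose)) :
    IsLowerSet (rowBits A ⟨0, hn⟩ : Set ℕ) := by
  intro m l hlm hm
  obtain ⟨j, hj, rfl⟩ := Finset.mem_image.1 (Finset.mem_coe.1 hm)
  have hone : A.transpose j ⟨0, hn⟩ = true := (Finset.mem_filter.1 hj).2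
  refine Finset.mem_coe.2 (Finset.mem_image.2
    ⟨⟨n - 1 - l, by omega⟩, Finset.mem_filter.2 ⟨Finset.mem_univ _, ?_⟩, ?_⟩)
  · refine (leading_bit_iff A.transpose _ hn).2
      (((leading_bit_iff A.transpose j hn).1 hone).trans (hA (Fin.le_def.2 ?_)))
    dsimp only at hlm ⊢
    omega
  · dsimp only at hlm ⊢
    omega

theorem first_rowVal_of_canonical (n k : ℕ) (hk : 1 ≤ k) (hkn : k ≤ n)
    (A : Matrix (Fin n) (Fin n) Bool) (hA : A ∈ Lambda n k)
    (hcan : IsCanonical A) :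
    rowVal A ⟨0, Nat.lt_of_lt_of_le Nat.one_pos (hk.trans hkn)⟩ = 2 ^ k - 1 := by
  have hn : 0 < n := hk.trans hkn
  rw [rowVal_eq_sum_rowBits,
    Finset.eq_range_card_of_isLowerSet (isLowerSet_rowBits_zero hn hcan.2),
    card_rowBits, hA.1, Nat.geomSum_eq le_rfl, Nat.div_one]
end

section
/- For every integer n ≥ 2, the unique canonical matrix in Λ_n^{n−1} is the matrix with 0 on the main diagonal and 1 in every off-diagonal position, i.e. A(i,j) = 0 if i = j and A(i,j) = 1 if i ≠ j. -/
/-- A Boolean vector of positive length `n` has `n - 1` true entries iff it has a unique false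
entry. -/
lemma card_filter_true_eq_sub_one_iff {n : ℕ} (hn : 1 ≤ n) (v : Fin n → Bool) :
    (Finset.univ.filter fun j => v j = true).card = n - 1 ↔ ∃ k, ∀ j, v j = false ↔ j = k := by
  have hsum := Finset.card_filter_add_card_filter_not
    (s := (Finset.univ : Finset (Fin n))) (fun j => v j = true)
  rw [Finset.card_univ, Fintype.card_fin] at hsum
  have hone : (Finset.univ.filter fun j => v j = true).card = n - 1 ↔
      (Finset.univ.filter fun j => ¬ v j = true).card = 1 := by omega
  rw [hone, Finset.card_eq_one]
  simp [Finset.ext_iff]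

lemma rowVal_add_two_pow {n : ℕ} {A : Matrix (Fin n) (Fin n) Bool} {i k : Fin n}
    (h : ∀ j, A i j = false ↔ j = k) :
    rowVal A i + 2 ^ (n - 1 - (k : ℕ)) = ∑ j : Fin n, 2 ^ (n - 1 - (j : ℕ)) := by
  have hk : 2 ^ (n - 1 - (k : ℕ)) = ∑ j : Fin n, if j = k then 2 ^ (n - 1 - (j : ℕ)) else 0 := by
    simp
  rw [hk, rowVal, ← Finset.sum_add_distrib]
  refine Finset.sum_congr rfl fun j _ => ?_
  by_cases hj : j = k
  · simp [hj, (h k).2 rfl]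
  · simp [hj, Bool.eq_true_of_not_eq_false (mt (h j).1 hj)]

/-- Rows with a single zero are ordered by the position of that zero. -/
lemma rowVal_le_rowVal_iff {n : ℕ} {A : Matrix (Fin n) (Fin n) Bool} {i i' k k' : Fin n}
    (h : ∀ j, A i j = false ↔ j = k) (h' : ∀ j, A i' j = false ↔ j = k') :
    rowVal A i ≤ rowVal A i' ↔ k ≤ k' := by
  have hsum := (rowVal_add_two_pow h).trans (rowVal_add_two_pow h').symm
  have hpow : 2 ^ (n - 1 - (k' : ℕ)) ≤ 2 ^ (n - 1 - (k : ℕ)) ↔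
      n - 1 - (k' : ℕ) ≤ n - 1 - (k : ℕ) := Nat.pow_le_pow_iff_right (by norm_num)
  rw [Fin.le_def]
  omega

theorem canonical_in_Lambda_n_sub_one_iff_offdiagonal (n : ℕ) (hn : 2 ≤ n)
    (A : Matrix (Fin n) (Fin n) Bool) :
    (A ∈ Lambda n (n - 1) ∧ IsCanonical A) ↔
      A = Matrix.of fun i j : Fin n => decide (i ≠ j) := by
  have hn' : 1 ≤ n := by omega
  constructor
  · rintro ⟨⟨hrow, hcol⟩, hmono, -⟩
    choose f hf using fun i => (card_filter_true_eq_sub_one_iff hn' _).1 (hrow i)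
    choose g hg using fun j => (card_filter_true_eq_sub_one_iff hn' _).1 (hcol j)
    have hinj : Function.Injective f := fun i i' h =>
      ((hg (f i) i).1 ((hf i _).2 rfl)).trans ((hg (f i) i').1 ((hf i' _).2 h)).symm
    have hfmono : Monotone f := fun i i' h =>
      (rowVal_le_rowVal_iff (hf i) (hf i')).1 (hmono h)
    have hid : f = id := ((hfmono.strictMono_of_injective hinj).range_inj strictMono_id).1
      (by simp [(Finite.injective_iff_surjective.1 hinj).range_eq])
    subst hid
    ext i j
    rw [Bool.eq_iff_iff, ← not_iff_not, Bool.not_eq_true, hf i j]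
    simp [eq_comm (a := j)]
  · rintro rfl
    have hrow (i j : Fin n) :
        (Matrix.of fun i j : Fin n => decide (i ≠ j)) i j = false ↔ j = i := by
      simp [eq_comm (a := j)]
    have hcol (i j : Fin n) :
        (Matrix.of fun i j : Fin n => decide (i ≠ j)).transpose i j = false ↔ j = i := by
      simp
    exact ⟨⟨fun i => (card_filter_true_eq_sub_one_iff hn' _).2 ⟨i, hrow i⟩,
        fun j => (card_filter_true_eq_sub_one_iff hn' _).2 ⟨j, hcol j⟩⟩,
      fun i i' => (rowVal_le_rowVal_iff (hrow i) (hrow i')).2,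
      fun i i' => (rowVal_le_rowVal_iff (hcol i) (hcol i')).2⟩
end

section
/- Every equivalence class of Λ_n^k under the relation ∼ (row and column permutations) contains at least one canonical matrix; that is, for every A ∈ Λ_n^k there exist a permutation of the rows and a permutation of the columns of A yielding a canonical matrix. -/
/-- A function minimizing its pairing with strictly decreasing weights among all its
rearrangements is monotone. -/
theorem monotone_of_forall_sum_mul_le {n : ℕ} {w f : Fin n → ℕ} (hw : StrictAnti w)
    (h : ∀ π : Equiv.Perm (Fin n), ∑ i, w i * f i ≤ ∑ i, w i * f (π i)) : Monotone f := by
  have hs : Monotone (f ∘ Tuple.sort f) := Tuple.monotone_sort f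
  have hanti : Antivary w (f ∘ Tuple.sort f) := hw.antitone.antivary hs
  have hle := hanti.sum_mul_le_sum_mul_comp_perm (σ := (Tuple.sort f)⁻¹)
  have heq := hanti.sum_mul_eq_sum_mul_comp_perm_iff (σ := (Tuple.sort f)⁻¹)
  have hcomp : (f ∘ Tuple.sort f) ∘ ⇑(Tuple.sort f)⁻¹ = f := by
    ext i; simp
  have happ (i : Fin n) : (f ∘ Tuple.sort f) ((Tuple.sort f)⁻¹ i) = f i := congrFun hcomp i
  simp only [hcomp, happ] at heq hle
  have hwf := heq.1 (le_antisymm (h _) hle)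
  intro i j hij
  by_contra! hlt
  have hji := hw.le_iff_ge.1 (hwf hlt)
  rw [le_antisymm hij hji] at hlt
  exact lt_irrefl _ hlt

/-- The positional weights of binary digits are strictly decreasing. -/
theorem strictAnti_two_pow_sub (n : ℕ) :
    StrictAnti fun i : Fin n => 2 ^ (n - 1 - (i : ℕ)) := fun i j hij =>
  Nat.pow_lt_pow_right one_lt_two (by have := j.isLt; rw [Fin.lt_def] at hij; omega)

/-- The sum of the row values of a matrix, weighted by the positional weights of the rows. -/
def weight {n : ℕ} (A : Matrix (Fin n) (Fin n) Bool) : ℕ :=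
  ∑ i : Fin n, 2 ^ (n - 1 - (i : ℕ)) * rowVal A i

theorem weight_transpose {n : ℕ} (A : Matrix (Fin n) (Fin n) Bool) :
    weight A.transpose = weight A := by
  simp only [weight, rowVal, Finset.mul_sum]
  rw [Finset.sum_comm]
  refine Finset.sum_congr rfl fun i _ => Finset.sum_congr rfl fun j _ => ?_
  by_cases h : A i j = true <;> simp [h, mul_comm]

theorem monotone_rowVal_of_forall_weight_le {n : ℕ} {A : Matrix (Fin n) (Fin n) Bool}
    (h : ∀ π : Equiv.Perm (Fin n), weight A ≤ weight (A.submatrix π id)) :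
    Monotone (rowVal A) :=
  monotone_of_forall_sum_mul_le (strictAnti_two_pow_sub n) h

theorem exists_canonical_in_class (n k : ℕ) (A : Matrix (Fin n) (Fin n) Bool)
    (hA : A ∈ Lambda n k) :
    ∃ σ τ : Equiv.Perm (Fin n),
      IsCanonical (Matrix.of fun i j => A (σ i) (τ j)) := by
  obtain ⟨⟨σ, τ⟩, hmin⟩ := Finite.exists_min
    fun p : Equiv.Perm (Fin n) × Equiv.Perm (Fin n) => weight (A.submatrix p.1 p.2)
  refine ⟨σ, τ, monotone_rowVal_of_forall_weight_le fun π => hmin (σ * π, τ),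
    monotone_rowVal_of_forall_weight_le fun π => ?_⟩
  rw [weight_transpose, ← weight_transpose (Matrix.submatrix _ _ _)]
  exact hmin (σ, τ * π)
end

section
/- Let k ≥ 3 be an integer. If A = (α_{ij}) ∈ Λ_{k+2}^k is a canonical matrix, then α_{1,1} = α_{1,2} = α_{2,1} = 0, and α_{1,j} = 1 for all 3 ≤ j ≤ k+2 and α_{i,1} = 1 for all 3 ≤ i ≤ k+2. -/
/-- The leading digit of the row values is nondecreasing when the row values are. -/
theorem leading_entry_of_monotone_rowVal {m : ℕ} {A : Matrix (Fin (m + 1)) (Fin (m + 1)) Bool}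
    (hA : Monotone (rowVal A)) {i j : Fin (m + 1)} (hij : i ≤ j) (hi : A i 0 = true) :
    A j 0 = true := by
  by_contra hj
  have lower : 2 ^ m ≤ rowVal A i := by
    simp [rowVal, Fin.sum_univ_succ, hi]
  have upper : rowVal A j < 2 ^ m := by
    calc rowVal A j ≤ ∑ l : Fin m, 2 ^ (m - 1 - (l : ℕ)) := by
          rw [rowVal, Fin.sum_univ_succ, if_neg hj, zero_add]
          refine Finset.sum_le_sum fun l _ => ?_
          have hl : m + 1 - 1 - (l.succ : ℕ) = m - 1 - (l : ℕ) := by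
            rw [Fin.val_succ]; omega
          rw [hl]
          split_ifs <;> simp
      _ = ∑ l ∈ Finset.range m, 2 ^ l := by
          rw [Fin.sum_univ_eq_sum_range (fun l => 2 ^ (m - 1 - l)) m,
            Finset.sum_range_reflect (fun l => 2 ^ l) m]
      _ < 2 ^ m := Nat.geomSum_lt le_rfl fun l hl => Finset.mem_range.mp hl
  exact absurd (hA hij) (by omega)

/-- A nondecreasing 0-1 vector of length `k + 2` with exactly `k` ones starts with two zeros. -/
theorem eq_true_iff_two_le {k : ℕ} {f : Fin (k + 2) → Bool}
    (hf : ∀ i j, i ≤ j → f i = true → f j = true)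
    (hcard : (Finset.univ.filter fun i => f i = true).card = k) (i : Fin (k + 2)) :
    f i = true ↔ 2 ≤ (i : ℕ) := by
  constructor
  · intro hi
    have hsub : Finset.Ici i ⊆ Finset.univ.filter fun i => f i = true := fun j hj => by
      simpa using hf i j (Finset.mem_Ici.mp hj) hi
    have := Finset.card_le_card hsub
    rw [Fin.card_Ici, hcard] at this
    omega
  · intro hi
    by_contra hfi
    have hsub : (Finset.univ.filter fun i => f i = true) ⊆ Finset.Ioi i := fun j hj => by
      rw [Finset.mem_Ioi]
      by_contra hji
      exact hfi (hf j i (not_lt.mp hji) (Finset.mem_filter.mp hj).2)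
    have := Finset.card_le_card hsub
    rw [Fin.card_Ioi, hcard] at this
    omega

theorem canonical_corner_entries (k : ℕ) (hk : 3 ≤ k)
    (A : Matrix (Fin (k + 2)) (Fin (k + 2)) Bool)
    (hA : A ∈ Lambda (k + 2) k) (hcan : IsCanonical A) :
    A 0 0 = false ∧ A 0 1 = false ∧ A 1 0 = false ∧
    (∀ j : Fin (k + 2), 2 ≤ (j : ℕ) → A 0 j = true) ∧
    (∀ i : Fin (k + 2), 2 ≤ (i : ℕ) → A i 0 = true) := by
  have hcol := eq_true_iff_two_le
    (fun _ _ => leading_entry_of_monotone_rowVal hcan.1) (hA.2 0)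
  have hrow := eq_true_iff_two_le (f := fun j => A 0 j)
    (fun _ _ => leading_entry_of_monotone_rowVal hcan.2) (hA.1 0)
  refine ⟨?_, ?_, ?_, fun j => (hrow j).mpr, fun i => (hcol i).mpr⟩
  · simpa using hrow 0
  · simpa using hrow 1
  · simpa using hcol 1
end

section
/- Let k ≥ 3 be an integer. The number of canonical matrices A = (α_{ij}) ∈ Λ_{k+2}^k with α_{2,2} = 0 equals the number of canonical matrices in Λ_k^{k−2}; a bijection is given by deleting the first two rows and the first two columns of A. -/
/-- The natural number with binary digits `f 0, f 1, …, f (n - 1)`, most significant first. -/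
def binVal {n : ℕ} (f : Fin n → Bool) : ℕ :=
  ∑ j : Fin n, if f j = true then 2 ^ (n - 1 - (j : ℕ)) else 0

lemma rowVal_eq_binVal {n : ℕ} (A : Matrix (Fin n) (Fin n) Bool) (i : Fin n) :
    rowVal A i = binVal (A i) := rfl

lemma binVal_succ {n : ℕ} (f : Fin (n + 1) → Bool) :
    binVal f = (if f 0 = true then 2 ^ n else 0) + binVal fun j => f j.succ := by
  unfold binVal
  rw [Fin.sum_univ_succ]
  congr 1
  refine Finset.sum_congr rfl fun j _ => ?_
  have h : n + 1 - 1 - (j.succ : ℕ) = n - 1 - (j : ℕ) := by simp; omega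
  rw [h]

lemma binVal_lt {n : ℕ} (f : Fin n → Bool) : binVal f < 2 ^ n := by
  induction n with
  | zero => simp [binVal]
  | succ n ih =>
    rw [binVal_succ, pow_succ]
    have := ih fun j => f j.succ
    split_ifs <;> omega

lemma head_le_of_binVal_le {n : ℕ} {f g : Fin (n + 1) → Bool} (h : binVal f ≤ binVal g)
    (hf : f 0 = true) : g 0 = true := by
  by_contra hg
  rw [binVal_succ f, binVal_succ g, if_pos hf, if_neg hg] at h
  have := binVal_lt fun j => g j.succ
  omega

lemma card_filter_succ {n : ℕ} (f : Fin (n + 1) → Bool) :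
    (Finset.univ.filter fun j => f j = true).card =
      (f 0).toNat + (Finset.univ.filter fun j : Fin n => f j.succ = true).card := by
  rw [Finset.card_filter, Finset.card_filter, Fin.sum_univ_succ]
  congr 1
  cases f 0 <;> rfl

lemma eq_true_of_card_filter {k : ℕ} {f : Fin (k + 2) → Bool}
    (hc : (Finset.univ.filter fun j => f j = true).card = k)
    (h0 : f 0 = false) (h1 : f 1 = false) (j : Fin k) : f j.succ.succ = true := by
  rw [card_filter_succ, card_filter_succ, Fin.succ_zero_eq_one, h0, h1] at hc
  have h : (Finset.univ.filter fun j : Fin k => f j.succ.succ = true).card =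
      (Finset.univ : Finset (Fin k)).card := by simpa using hc
  exact Finset.card_filter_eq_iff.mp h j (Finset.mem_univ j)

/-- A row with two zeros whose entries are the leading digits of an increasing family of columns
begins with these two zeros. -/
lemma head_row_eq_false {k : ℕ} {A : Matrix (Fin (k + 2)) (Fin (k + 2)) Bool}
    (hc : (Finset.univ.filter fun j => A 0 j = true).card = k)
    (hm : Monotone (rowVal A.transpose)) : A 0 0 = false ∧ A 0 1 = false := by
  have mono {i j : Fin (k + 2)} (hij : i ≤ j) (h : A 0 i = true) : A 0 j = true :=
    head_le_of_binVal_le (hm hij) h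
  have h1 : A 0 1 = false := by
    by_contra h
    have hall (j : Fin (k + 1)) : A 0 j.succ = true :=
      mono (by simp [Fin.le_def]) (Bool.eq_true_of_not_eq_false h)
    rw [card_filter_succ] at hc
    simp [hall] at hc
    omega
  refine ⟨?_, h1⟩
  by_contra h
  simp [mono (Fin.zero_le 1) (Bool.eq_true_of_not_eq_false h)] at h1

/-- The matrix obtained by deleting the first two rows and columns. -/
def deleteTwo {k : ℕ} (A : Matrix (Fin (k + 2)) (Fin (k + 2)) Bool) :
    Matrix (Fin k) (Fin k) Bool :=
  Matrix.of fun i j => A (i.addNat 2) (j.addNat 2)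

/-- The first two rows of `A` are `0 0 1 ⋯ 1`, and all other rows begin with `1 1`. -/
structure IsBordered {k : ℕ} (A : Matrix (Fin (k + 2)) (Fin (k + 2)) Bool) : Prop where
  zero_zero : A 0 0 = false
  zero_one : A 0 1 = false
  one_zero : A 1 0 = false
  one_one : A 1 1 = false
  zero_succ (j : Fin k) : A 0 j.succ.succ = true
  one_succ (j : Fin k) : A 1 j.succ.succ = true
  succ_zero (i : Fin k) : A i.succ.succ 0 = true
  succ_one (i : Fin k) : A i.succ.succ 1 = true

namespace IsBordered

variable {k : ℕ} {A A' : Matrix (Fin (k + 2)) (Fin (k + 2)) Bool}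

lemma transpose (h : IsBordered A) : IsBordered A.transpose :=
  ⟨h.zero_zero, h.one_zero, h.zero_one, h.one_one, h.succ_zero, h.succ_one, h.zero_succ,
    h.one_succ⟩

lemma of_canonical (hA : A ∈ Lambda (k + 2) k) (hc : IsCanonical A) (h11 : A 1 1 = false) :
    IsBordered A := by
  obtain ⟨h00, h01⟩ := head_row_eq_false (hA.1 0) hc.2
  obtain ⟨-, h10⟩ := head_row_eq_false (A := A.transpose) (hA.2 0) hc.1
  exact ⟨h00, h01, h10, h11, eq_true_of_card_filter (hA.1 0) h00 h01,
    eq_true_of_card_filter (hA.1 1) h10 h11, eq_true_of_card_filter (hA.2 0) h00 h10,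
    eq_true_of_card_filter (hA.2 1) h01 h11⟩

lemma ext (h : IsBordered A) (h' : IsBordered A') (hd : deleteTwo A = deleteTwo A') : A = A' := by
  ext i j
  refine Fin.cases ?_ (Fin.cases ?_ fun i => ?_) i <;>
    refine Fin.cases ?_ (Fin.cases ?_ fun j => ?_) j
  · exact h.zero_zero.trans h'.zero_zero.symm
  · exact h.zero_one.trans h'.zero_one.symm
  · exact (h.zero_succ j).trans (h'.zero_succ j).symm
  · exact h.one_zero.trans h'.one_zero.symm
  · exact h.one_one.trans h'.one_one.symm
  · exact (h.one_succ j).trans (h'.one_succ j).symm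
  · exact (h.succ_zero i).trans (h'.succ_zero i).symm
  · exact (h.succ_one i).trans (h'.succ_one i).symm
  · exact congrFun (congrFun hd i) j

lemma card_row_succ (h : IsBordered A) (i : Fin k) :
    (Finset.univ.filter fun j => A i.succ.succ j = true).card =
      (Finset.univ.filter fun j => deleteTwo A i j = true).card + 2 := by
  rw [card_filter_succ, card_filter_succ, Fin.succ_zero_eq_one, h.succ_zero, h.succ_one,
    ← add_assoc, add_comm]
  rfl

lemma forall_card_row_iff (h : IsBordered A) (hk : 2 ≤ k) :
    (∀ i, (Finset.univ.filter fun j => A i j = true).card = k) ↔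
      ∀ i, (Finset.univ.filter fun j => deleteTwo A i j = true).card = k - 2 := by
  have h0 : (Finset.univ.filter fun j => A 0 j = true).card = k := by
    rw [card_filter_succ, card_filter_succ, Fin.succ_zero_eq_one, h.zero_zero, h.zero_one]
    simp [h.zero_succ]
  have h1 : (Finset.univ.filter fun j => A 1 j = true).card = k := by
    rw [card_filter_succ, card_filter_succ, Fin.succ_zero_eq_one, h.one_zero, h.one_one]
    simp [h.one_succ]
  rw [Fin.forall_fin_succ, Fin.forall_fin_succ, Fin.succ_zero_eq_one]
  simp only [h0, h1, true_and, h.card_row_succ]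
  exact forall_congr' fun i => by omega

lemma mem_Lambda_iff (h : IsBordered A) (hk : 2 ≤ k) :
    A ∈ Lambda (k + 2) k ↔ deleteTwo A ∈ Lambda k (k - 2) :=
  and_congr (h.forall_card_row_iff hk) (h.transpose.forall_card_row_iff hk)

lemma rowVal_succ (h : IsBordered A) (i : Fin k) :
    rowVal A i.succ.succ = 2 ^ (k + 1) + (2 ^ k + rowVal (deleteTwo A) i) := by
  rw [rowVal_eq_binVal, binVal_succ, binVal_succ, Fin.succ_zero_eq_one, if_pos (h.succ_zero i),
    if_pos (h.succ_one i)]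
  rfl

lemma rowVal_one (h : IsBordered A) : rowVal A 1 = rowVal A 0 := by
  have hrow : A 1 = A 0 := by
    ext j
    refine Fin.cases ?_ (Fin.cases ?_ fun j => ?_) j
    · exact h.one_zero.trans h.zero_zero.symm
    · exact h.one_one.trans h.zero_one.symm
    · exact (h.one_succ j).trans (h.zero_succ j).symm
  rw [rowVal_eq_binVal, rowVal_eq_binVal, hrow]

lemma rowVal_zero_lt (h : IsBordered A) : rowVal A 0 < 2 ^ (k + 1) := by
  rw [rowVal_eq_binVal, binVal_succ, h.zero_zero]
  simpa using binVal_lt fun j : Fin (k + 1) => A 0 j.succ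

lemma monotone_rowVal_iff (h : IsBordered A) :
    Monotone (rowVal A) ↔ Monotone (rowVal (deleteTwo A)) := by
  constructor
  · intro hm i j hij
    have := hm (Fin.succ_le_succ_iff.mpr (Fin.succ_le_succ_iff.mpr hij))
    rw [h.rowVal_succ, h.rowVal_succ] at this
    omega
  · intro hm
    have hlt := h.rowVal_zero_lt
    have h1 := h.rowVal_one
    intro i j
    refine Fin.cases ?_ (Fin.cases ?_ fun i => ?_) i <;>
      refine Fin.cases ?_ (Fin.cases ?_ fun j => ?_) j <;>
      intro hij
    · exact le_rfl
    · exact h1.ge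
    · rw [h.rowVal_succ]; omega
    · exact h1.le
    · exact le_rfl
    · rw [h.rowVal_succ, Fin.succ_zero_eq_one]; omega
    · simp at hij
    · simp [Fin.le_def] at hij
    · rw [h.rowVal_succ, h.rowVal_succ]
      have := hm (Fin.succ_le_succ_iff.mp (Fin.succ_le_succ_iff.mp hij))
      omega

lemma isCanonical_iff (h : IsBordered A) : IsCanonical A ↔ IsCanonical (deleteTwo A) :=
  and_congr h.monotone_rowVal_iff h.transpose.monotone_rowVal_iff

lemma exists_deleteTwo_eq (B : Matrix (Fin k) (Fin k) Bool) :
    ∃ A, IsBordered A ∧ deleteTwo A = B := by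
  let r : Fin (k + 2) → Bool := Fin.cons false (Fin.cons false fun _ => true)
  let A : Fin (k + 2) → Fin (k + 2) → Bool :=
    Fin.cons r (Fin.cons r fun i => Fin.cons true (Fin.cons true (B i)))
  exact ⟨A, ⟨rfl, rfl, rfl, rfl, fun _ => rfl, fun _ => rfl, fun _ => rfl, fun _ => rfl⟩, rfl⟩

end IsBordered

lemma bijOn_deleteTwo {k : ℕ} (hk : 2 ≤ k) :
    Set.BijOn deleteTwo
      {A : Matrix (Fin (k + 2)) (Fin (k + 2)) Bool |
        A ∈ Lambda (k + 2) k ∧ IsCanonical A ∧ A 1 1 = false}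
      {B | B ∈ Lambda k (k - 2) ∧ IsCanonical B} := by
  refine ⟨?_, ?_, ?_⟩
  · rintro A ⟨hA, hc, h11⟩
    have h := IsBordered.of_canonical hA hc h11
    exact ⟨(h.mem_Lambda_iff hk).mp hA, h.isCanonical_iff.mp hc⟩
  · rintro A ⟨hA, hc, h11⟩ A' ⟨hA', hc', h11'⟩ hd
    exact (IsBordered.of_canonical hA hc h11).ext (IsBordered.of_canonical hA' hc' h11') hd
  · rintro B ⟨hB, hc⟩
    obtain ⟨A, h, rfl⟩ := IsBordered.exists_deleteTwo_eq B
    exact ⟨A, ⟨(h.mem_Lambda_iff hk).mpr hB, h.isCanonical_iff.mpr hc, h.one_one⟩, rfl⟩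

theorem bij_case_alpha22_zero (k : ℕ) (hk : 3 ≤ k) :
    Set.BijOn
      (fun A : Matrix (Fin (k + 2)) (Fin (k + 2)) Bool =>
        Matrix.of fun i j : Fin k => A (i.addNat 2) (j.addNat 2))
      {A | A ∈ Lambda (k + 2) k ∧ IsCanonical A ∧ A 1 1 = false}
      {B | B ∈ Lambda k (k - 2) ∧ IsCanonical B} ∧
    Nat.card {A : Matrix (Fin (k + 2)) (Fin (k + 2)) Bool |
        A ∈ Lambda (k + 2) k ∧ IsCanonical A ∧ A 1 1 = false} =
      Nat.card {B : Matrix (Fin k) (Fin k) Bool |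
        B ∈ Lambda k (k - 2) ∧ IsCanonical B} := by
  have h := bijOn_deleteTwo (le_trans (Nat.le_succ 2) hk)
  exact ⟨h, Nat.card_congr (h.equiv _)⟩
end

section
/- Let C(n,k) denote the number of canonical matrices in Λ_n^k. Then for every integer k ≥ 3, C(k+2, k) = C(k, k−2) + C(k+1, k−1). -/
/-- `C n k` : the number of canonical matrices in `Λ_n^k`. -/
noncomputable def C (n k : ℕ) : ℕ :=
  Nat.card {A : Matrix (Fin n) (Fin n) Bool | A ∈ Lambda n k ∧ IsCanonical A}

namespace CanonicalCount

/-- The number with binary digits `v`, most significant digit first. -/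
def binVal {n : ℕ} (v : Fin n → Bool) : ℕ :=
  ∑ j : Fin n, if v j = true then 2 ^ (n - 1 - (j : ℕ)) else 0

/-- The number of zeros of a binary vector. -/
def zeroCount {n : ℕ} (v : Fin n → Bool) : ℕ :=
  (Finset.univ.filter fun j => v j = false).card

lemma binVal_succ {n : ℕ} (v : Fin (n + 1) → Bool) :
    binVal v = (if v 0 = true then 2 ^ n else 0) + binVal fun j => v j.succ := by
  unfold binVal
  rw [Fin.sum_univ_succ]
  congr 1
  refine Finset.sum_congr rfl fun j _ => ?_
  have : n + 1 - 1 - (j.succ : ℕ) = n - 1 - (j : ℕ) := by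
    rw [Fin.val_succ]; omega
  rw [this]

lemma binVal_lt {n : ℕ} (v : Fin n → Bool) : binVal v < 2 ^ n := by
  induction n with
  | zero => simp [binVal]
  | succ n ih =>
    rw [binVal_succ, pow_succ]
    have := ih fun j => v j.succ
    split_ifs <;> omega

lemma zeroCount_succ {n : ℕ} (v : Fin (n + 1) → Bool) :
    zeroCount v = (if v 0 = false then 1 else 0) + zeroCount fun j => v j.succ := by
  unfold zeroCount
  rw [Fin.card_filter_univ_succ]
  split_ifs <;> simp [add_comm]

lemma zeroCount_eq_zero_iff {n : ℕ} {v : Fin n → Bool} :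
    zeroCount v = 0 ↔ ∀ j, v j = true := by
  simp [zeroCount, Finset.filter_eq_empty_iff]

@[simp]
lemma zeroCount_true {n : ℕ} : zeroCount (fun _ : Fin n => true) = 0 := by
  simp [zeroCount]

lemma head_le_of_binVal_le {n : ℕ} {v w : Fin (n + 1) → Bool} (h : binVal v ≤ binVal w) :
    v 0 ≤ w 0 := by
  rw [binVal_succ, binVal_succ w] at h
  have := binVal_lt fun j => w j.succ
  cases hv : v 0 <;> cases hw : w 0 <;> simp_all
  omega

lemma tail_le_of_binVal_le {n : ℕ} {v w : Fin (n + 1) → Bool} (h : binVal v ≤ binVal w)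
    (h0 : v 0 = w 0) : binVal (fun j => v j.succ) ≤ binVal fun j => w j.succ := by
  rw [binVal_succ, binVal_succ w, h0] at h
  omega

/-- A vector with at most one zero is at least `01⋯1`. -/
lemma binVal_true_le {n : ℕ} {v : Fin (n + 1) → Bool} (h : zeroCount v ≤ 1) :
    binVal (fun _ : Fin n => true) ≤ binVal v := by
  rw [binVal_succ]
  rw [zeroCount_succ] at h
  cases hv : v 0
  · have h' : (fun j : Fin n => v j.succ) = fun _ => true :=
      funext (zeroCount_eq_zero_iff.1 (by simp [hv] at h; omega))
    simp [h']
  · have := binVal_lt fun _ : Fin n => true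
    simp
    omega

lemma head_eq_false_of_monotone {n : ℕ} {v : Fin (n + 1) → Bool} (hm : Monotone v)
    (h : zeroCount v ≠ 0) : v 0 = false := by
  by_contra h0
  refine h (zeroCount_eq_zero_iff.2 fun j => ?_)
  have := hm (Fin.zero_le j)
  rw [Bool.eq_true_of_not_eq_false h0] at this
  exact top_le_iff.1 this

lemma eq_cons_false_true_of_monotone {n : ℕ} {v : Fin (n + 1) → Bool} (hm : Monotone v)
    (h : zeroCount v = 1) : v = Fin.cons false fun _ => true := by
  have h0 := head_eq_false_of_monotone hm (by omega)
  rw [zeroCount_succ, h0] at h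
  have ht := zeroCount_eq_zero_iff.1 (by simpa using h : zeroCount (fun j => v j.succ) = 0)
  funext j
  cases j using Fin.cases <;> simp [h0, ht]

lemma monotone_succ_iff {n : ℕ} {f : Fin (n + 1) → ℕ} :
    Monotone f ↔ (∀ i : Fin n, f 0 ≤ f i.succ) ∧ Monotone fun i : Fin n => f i.succ := by
  refine ⟨fun h => ⟨fun i => h (Fin.zero_le _), fun i j hij => h (Fin.succ_le_succ_iff.2 hij)⟩,
    fun ⟨h0, h⟩ i j hij => ?_⟩
  cases i using Fin.cases with
  | zero =>
    cases j using Fin.cases with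
    | zero => exact le_rfl
    | succ j => exact h0 j
  | succ i =>
    cases j using Fin.cases with
    | zero => simp at hij
    | succ j => exact h (Fin.succ_le_succ_iff.1 hij)

/-- Rows have exactly two zeros each and are sorted. -/
def RowGood {n : ℕ} (A : Matrix (Fin n) (Fin n) Bool) : Prop :=
  (∀ i, zeroCount (A i) = 2) ∧ Monotone fun i => binVal (A i)

/-- Canonical matrices with exactly two zeros in each row and each column. -/
def Good {n : ℕ} (A : Matrix (Fin n) (Fin n) Bool) : Prop :=
  RowGood A ∧ RowGood A.transpose

lemma Good.transpose {n : ℕ} {A : Matrix (Fin n) (Fin n) Bool} (h : Good A) :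
    Good A.transpose := ⟨h.2, h.1⟩

lemma mem_Lambda_and_isCanonical_iff {n k : ℕ} (h : n = k + 2)
    (A : Matrix (Fin n) (Fin n) Bool) : A ∈ Lambda n k ∧ IsCanonical A ↔ Good A := by
  have key (v : Fin n → Bool) :
      (Finset.univ.filter fun j => v j = true).card = k ↔ zeroCount v = 2 := by
    have := Finset.card_filter_add_card_filter_not (s := Finset.univ) fun j => v j = true
    simp only [Finset.card_univ, Fintype.card_fin, Bool.not_eq_true] at this
    unfold zeroCount
    omega
  simp only [Lambda, Set.mem_ofPred_eq, key]
  exact and_and_and_comm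

lemma C_eq_ncard {n k : ℕ} (h : n = k + 2) :
    C n k = {A : Matrix (Fin n) (Fin n) Bool | Good A}.ncard := by
  simp only [C, mem_Lambda_and_isCanonical_iff h]
  rfl

/-- The matrix with corner `a`, rest of the first row `r`, rest of the first column `c`,
and remaining block `B`. -/
def border {n : ℕ} (a : Bool) (r c : Fin n → Bool) (B : Matrix (Fin n) (Fin n) Bool) :
    Matrix (Fin (n + 1)) (Fin (n + 1)) Bool :=
  Fin.cons (Fin.cons a r) fun i => Fin.cons (c i) (B i)

section border

variable {n : ℕ} (a : Bool) (r c : Fin n → Bool) (B : Matrix (Fin n) (Fin n) Bool)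

@[simp] lemma border_zero_zero : border a r c B 0 0 = a := rfl

@[simp] lemma border_zero_succ (j : Fin n) : border a r c B 0 j.succ = r j := rfl

@[simp] lemma border_succ_zero (i : Fin n) : border a r c B i.succ 0 = c i := rfl

@[simp] lemma border_succ_succ (i j : Fin n) : border a r c B i.succ j.succ = B i j := rfl

lemma border_transpose : (border a r c B).transpose = border a c r B.transpose := by
  ext i j
  cases i using Fin.cases <;> cases j using Fin.cases <;> rfl

lemma eq_border {n : ℕ} (A : Matrix (Fin (n + 1)) (Fin (n + 1)) Bool) :
    A = border (A 0 0) (fun j => A 0 j.succ) (fun i => A i.succ 0)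
      (A.submatrix Fin.succ Fin.succ) := by
  ext i j
  cases i using Fin.cases <;> cases j using Fin.cases <;> rfl

end border

/-- Replace the corner entry of a matrix. -/
def setCorner {n : ℕ} (a : Bool) (B : Matrix (Fin (n + 1)) (Fin (n + 1)) Bool) :
    Matrix (Fin (n + 1)) (Fin (n + 1)) Bool :=
  border a (fun j => B 0 j.succ) (fun i => B i.succ 0) (B.submatrix Fin.succ Fin.succ)

lemma setCorner_transpose {n : ℕ} (a : Bool) (B : Matrix (Fin (n + 1)) (Fin (n + 1)) Bool) :
    (setCorner a B).transpose = setCorner a B.transpose :=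
  border_transpose _ _ _ _

lemma setCorner_setCorner {n : ℕ} (a b : Bool) (B : Matrix (Fin (n + 1)) (Fin (n + 1)) Bool) :
    setCorner a (setCorner b B) = setCorner a B := rfl

lemma setCorner_self {n : ℕ} (B : Matrix (Fin (n + 1)) (Fin (n + 1)) Bool) :
    setCorner (B 0 0) B = B := (eq_border B).symm

/-- Prepend a row and a column equal to `001⋯1`. -/
def extend {n : ℕ} (M : Matrix (Fin (n + 1)) (Fin (n + 1)) Bool) :
    Matrix (Fin (n + 2)) (Fin (n + 2)) Bool :=
  border false (Fin.cons false fun _ => true) (Fin.cons false fun _ => true) M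

lemma extend_injective {n : ℕ} : Function.Injective (extend (n := n)) := by
  intro M N h
  ext i j
  exact congrFun (congrFun h i.succ) j.succ

/-- Prepend a `2 × 2` zero block on the diagonal. -/
def addBlock {n : ℕ} (B : Matrix (Fin n) (Fin n) Bool) :
    Matrix (Fin (n + 2)) (Fin (n + 2)) Bool :=
  extend (border false (fun _ => true) (fun _ => true) B)

/-- Lengthen the first diagonal block by one. -/
def growBlock {n : ℕ} (B : Matrix (Fin (n + 1)) (Fin (n + 1)) Bool) :
    Matrix (Fin (n + 2)) (Fin (n + 2)) Bool :=
  extend (setCorner true B)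

lemma extend_transpose {n : ℕ} (M : Matrix (Fin (n + 1)) (Fin (n + 1)) Bool) :
    (extend M).transpose = extend M.transpose :=
  border_transpose _ _ _ _

lemma addBlock_transpose {n : ℕ} (B : Matrix (Fin n) (Fin n) Bool) :
    (addBlock B).transpose = addBlock B.transpose := by
  rw [addBlock, extend_transpose, border_transpose, addBlock]

lemma growBlock_transpose {n : ℕ} (B : Matrix (Fin (n + 1)) (Fin (n + 1)) Bool) :
    (growBlock B).transpose = growBlock B.transpose := by
  rw [growBlock, extend_transpose, setCorner_transpose, growBlock]

lemma addBlock_injective {n : ℕ} : Function.Injective (addBlock (n := n)) := by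
  intro M N h
  ext i j
  exact congrFun (congrFun h i.succ.succ) j.succ.succ

lemma rowGood_addBlock {n : ℕ} (B : Matrix (Fin n) (Fin n) Bool) :
    RowGood (addBlock B) ↔ RowGood B := by
  simp only [RowGood, monotone_succ_iff, Fin.forall_fin_succ, zeroCount_succ, binVal_succ,
    addBlock, extend, border_zero_zero, border_zero_succ, border_succ_zero, border_succ_succ,
    Fin.cons_zero, Fin.cons_succ, zeroCount_true]
  have hlt := binVal_lt fun _ : Fin n => true
  simp [Monotone]
  intro _ _ i
  omega

lemma rowGood_growBlock {n : ℕ} {B : Matrix (Fin (n + 1)) (Fin (n + 1)) Bool}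
    (h0 : B 0 0 = false) :
    RowGood (growBlock B) ↔ (∀ i, zeroCount (B i) = 2) ∧
      Monotone fun i : Fin n => binVal (B i.succ) := by
  simp only [RowGood, monotone_succ_iff, Fin.forall_fin_succ, zeroCount_succ, binVal_succ,
    growBlock, extend, setCorner, border_zero_zero, border_zero_succ, border_succ_zero,
    border_succ_succ, Fin.cons_zero, Fin.cons_succ, zeroCount_true, h0, Matrix.submatrix_apply]
  have hlt := binVal_lt fun _ : Fin n => true
  have hlt' := binVal_lt fun j : Fin n => B 0 j.succ
  simp [Monotone]
  refine and_congr_right fun _ => ⟨fun h => h.2.2, fun h => ⟨⟨?_, fun i => ?_⟩, fun i => ?_, h⟩⟩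
  all_goals
    have hp := pow_succ 2 n
    omega

lemma rowGood_of_growBlock {n : ℕ} {B : Matrix (Fin (n + 2)) (Fin (n + 2)) Bool}
    (h0 : B 0 = Fin.cons false (Fin.cons false fun _ => true)) (h : RowGood (growBlock B)) :
    RowGood B := by
  obtain ⟨h1, h2⟩ := (rowGood_growBlock (by rw [h0]; rfl)).1 h
  refine ⟨h1, monotone_succ_iff.2 ⟨fun i => ?_, h2⟩⟩
  have hi := h1 i.succ
  rw [zeroCount_succ] at hi
  have hlt := binVal_lt fun _ : Fin n => true
  rw [h0, binVal_succ, binVal_succ, binVal_succ (B i.succ)]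
  simp only [Fin.cons_zero, Fin.cons_succ]
  cases hb : B i.succ 0
  · have := binVal_true_le (v := fun j => B i.succ j.succ) (by simp [hb] at hi; omega)
    simpa using this
  · simp [pow_succ]
    omega

lemma Good.monotone_zero {n : ℕ} {A : Matrix (Fin (n + 1)) (Fin (n + 1)) Bool} (h : Good A) :
    Monotone (A 0) :=
  fun _ _ hij => head_le_of_binVal_le (h.2.2 hij)

lemma Good.row_zero {n : ℕ} {A : Matrix (Fin (n + 2)) (Fin (n + 2)) Bool} (h : Good A) :
    A 0 = Fin.cons false (Fin.cons false fun _ => true) := by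
  have hm := h.monotone_zero
  have hc := h.1.1 0
  have h0 := head_eq_false_of_monotone hm (by omega)
  rw [zeroCount_succ, h0] at hc
  have ht := eq_cons_false_true_of_monotone (v := fun j => A 0 j.succ)
    (fun i j hij => hm (Fin.succ_le_succ_iff.2 hij)) (by simp at hc; omega)
  rw [← ht]
  funext j
  cases j using Fin.cases <;> simp [h0]

lemma Good.eq_extend {n : ℕ} {A : Matrix (Fin (n + 2)) (Fin (n + 2)) Bool} (h : Good A) :
    A = extend (A.submatrix Fin.succ Fin.succ) := by
  have hr := h.row_zero
  have hc := h.transpose.row_zero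
  have hc' (i) : A i 0 = _ := congrFun hc i
  conv_lhs => rw [eq_border A]
  simp only [hr, hc', extend]
  rfl

lemma Good.eq_addBlock {n : ℕ} {A : Matrix (Fin (n + 2)) (Fin (n + 2)) Bool} (h : Good A)
    (h1 : A 1 1 = false) :
    A = addBlock (A.submatrix (fun i => i.succ.succ) fun i => i.succ.succ) := by
  have key {A : Matrix (Fin (n + 2)) (Fin (n + 2)) Bool} (h : Good A) (h1 : A 1 1 = false) :
      (fun j : Fin n => A 1 j.succ.succ) = fun _ => true := by
    have hc := h.1.1 1
    have h0 : A 1 0 = false := congrFun h.transpose.row_zero 1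
    have h1' : A 1 (Fin.succ 0) = false := h1
    rw [zeroCount_succ, zeroCount_succ, h0, h1'] at hc
    exact funext (zeroCount_eq_zero_iff.1 (by simp at hc; omega))
  have hr := key h h1
  have hc : (fun i : Fin n => A i.succ.succ 1) = fun _ => true := key h.transpose h1
  refine h.eq_extend.trans (congrArg extend ?_)
  calc
    A.submatrix Fin.succ Fin.succ = border (A 1 1) (fun j => A 1 j.succ.succ)
        (fun i => A i.succ.succ 1) (A.submatrix (fun i => i.succ.succ) fun i => i.succ.succ) :=
      eq_border _
    _ = _ := by rw [hr, hc, h1]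

lemma Good.row_one {n : ℕ} {A : Matrix (Fin (n + 3)) (Fin (n + 3)) Bool} (h : Good A)
    (h1 : A 1 1 = true) :
    (fun j : Fin (n + 1) => A 1 j.succ.succ) = Fin.cons false fun _ => true := by
  have hc := h.1.1 1
  have h0 : A 1 0 = false := congrFun h.transpose.row_zero 1
  have h1' : A 1 (Fin.succ 0) = true := h1
  rw [zeroCount_succ, zeroCount_succ, h0, h1'] at hc
  refine eq_cons_false_true_of_monotone (fun i j hij => ?_) (by simp at hc; omega)
  have hv := h.2.2 (Fin.succ_le_succ_iff.2 (Fin.succ_le_succ_iff.2 hij))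
  refine head_le_of_binVal_le (tail_le_of_binVal_le hv ?_)
  simp [Matrix.transpose_apply, h.row_zero]

lemma Good.eq_growBlock {n : ℕ} {A : Matrix (Fin (n + 2)) (Fin (n + 2)) Bool} (h : Good A)
    (h1 : A 1 1 = true) :
    A = growBlock (setCorner false (A.submatrix Fin.succ Fin.succ)) := by
  refine h.eq_extend.trans (congrArg extend ?_)
  rw [setCorner_setCorner]
  conv_lhs => rw [← setCorner_self (A.submatrix Fin.succ Fin.succ)]
  exact congrArg (setCorner · _) h1

lemma good_addBlock {n : ℕ} (B : Matrix (Fin n) (Fin n) Bool) : Good (addBlock B) ↔ Good B := by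
  rw [Good, addBlock_transpose, rowGood_addBlock, rowGood_addBlock, Good]

lemma Good.growBlock {n : ℕ} {B : Matrix (Fin (n + 2)) (Fin (n + 2)) Bool} (h : Good B) :
    Good (growBlock B) := by
  have h0 : B 0 0 = false := congrFun h.row_zero 0
  refine ⟨(rowGood_growBlock h0).2 ⟨h.1.1, (monotone_succ_iff.1 h.1.2).2⟩, ?_⟩
  rw [growBlock_transpose]
  exact (rowGood_growBlock (B := B.transpose) h0).2 ⟨h.2.1, (monotone_succ_iff.1 h.2.2).2⟩

lemma Good.setCorner_submatrix {n : ℕ} {A : Matrix (Fin (n + 3)) (Fin (n + 3)) Bool}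
    (h : Good A) (h1 : A 1 1 = true) :
    Good (setCorner false (A.submatrix Fin.succ Fin.succ)) := by
  have key {A : Matrix (Fin (n + 3)) (Fin (n + 3)) Bool} (h : Good A) (h1 : A 1 1 = true) :
      RowGood (setCorner false (A.submatrix Fin.succ Fin.succ)) := by
    refine rowGood_of_growBlock ?_ (h.eq_growBlock h1 ▸ h.1)
    rw [← h.row_one h1]
    rfl
  refine ⟨key h h1, ?_⟩
  rw [setCorner_transpose]
  exact key h.transpose h1

lemma injOn_growBlock {n : ℕ} :
    Set.InjOn growBlock {B : Matrix (Fin (n + 2)) (Fin (n + 2)) Bool | Good B} := by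
  intro B hB B' hB' h
  have h' := congrArg (setCorner false) (extend_injective h)
  have hz {B : Matrix (Fin (n + 2)) (Fin (n + 2)) Bool} (hB : Good B) : B 0 0 = false :=
    congrFun hB.row_zero 0
  rw [setCorner_setCorner, setCorner_setCorner] at h'
  rwa [← hz hB, setCorner_self, hz hB, ← hz hB', setCorner_self] at h'

lemma setOf_good_eq (n : ℕ) :
    {A : Matrix (Fin (n + 3)) (Fin (n + 3)) Bool | Good A} =
      addBlock '' {B | Good B} ∪ growBlock '' {B | Good B} := by
  ext A
  constructor
  · intro h
    cases h1 : A 1 1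
    · have he := Good.eq_addBlock h h1
      exact Or.inl ⟨_, (good_addBlock _).1 (he ▸ h), he.symm⟩
    · exact Or.inr ⟨_, Good.setCorner_submatrix h h1, (Good.eq_growBlock h h1).symm⟩
  · rintro (⟨B, hB, rfl⟩ | ⟨B, hB, rfl⟩)
    · exact (good_addBlock B).2 hB
    · exact Good.growBlock hB

lemma ncard_good (n : ℕ) :
    {A : Matrix (Fin (n + 3)) (Fin (n + 3)) Bool | Good A}.ncard =
      {A : Matrix (Fin (n + 1)) (Fin (n + 1)) Bool | Good A}.ncard +
        {A : Matrix (Fin (n + 2)) (Fin (n + 2)) Bool | Good A}.ncard := by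
  rw [setOf_good_eq, Set.ncard_union_eq, Set.ncard_image_of_injective _ addBlock_injective,
    injOn_growBlock.ncard_image]
  rw [Set.disjoint_left]
  rintro _ ⟨B, -, rfl⟩ ⟨B', -, h⟩
  exact Bool.noConfusion (congrFun (congrFun h 1) 1 : true = false)

end CanonicalCount

theorem canonical_count_recurrence (k : ℕ) (hk : 3 ≤ k) :
    C (k + 2) k = C k (k - 2) + C (k + 1) (k - 1) := by
  obtain ⟨n, rfl⟩ : ∃ n, k = n + 1 := ⟨k - 1, by omega⟩
  rw [CanonicalCount.C_eq_ncard rfl, CanonicalCount.C_eq_ncard (by omega),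
    CanonicalCount.C_eq_ncard (by omega)]
  exact CanonicalCount.ncard_good n
end

section
/- There are exactly two canonical matrices in Λ_4^2, namely the matrices whose rows, read as 4-digit binary numbers, are the tuples ⟨3, 3, 12, 12⟩ and ⟨3, 5, 10, 12⟩. -/
/-- The natural number whose binary digits, most significant first, are the entries of `r`. -/
def binaryValue {n : ℕ} (r : Fin n → Bool) : ℕ :=
  ∑ j : Fin n, if r j = true then 2 ^ (n - 1 - (j : ℕ)) else 0

theorem binaryValue_four_injective :
    Function.Injective (binaryValue : (Fin 4 → Bool) → ℕ) := by
  unfold Function.Injective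
  decide +kernel

theorem rowVal_four_injective :
    Function.Injective (rowVal : Matrix (Fin 4) (Fin 4) Bool → Fin 4 → ℕ) :=
  fun _ _ h => funext fun i => binaryValue_four_injective (congrFun h i)

/-- The hypotheses on successive rows are interleaved with the quantifiers so that `decide`
only visits nondecreasing sequences of rows with two ones. -/
theorem rowVal_of_nondecreasing_rows :
    ∀ a : Fin 4 → Bool, (Finset.univ.filter fun j => a j = true).card = 2 →
    ∀ b : Fin 4 → Bool, (Finset.univ.filter fun j => b j = true).card = 2 →
      binaryValue a ≤ binaryValue b →
    ∀ c : Fin 4 → Bool, (Finset.univ.filter fun j => c j = true).card = 2 →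
      binaryValue b ≤ binaryValue c →
    ∀ d : Fin 4 → Bool, (Finset.univ.filter fun j => d j = true).card = 2 →
      binaryValue c ≤ binaryValue d →
    (∀ j, (Finset.univ.filter fun i => ![a, b, c, d] i j = true).card = 2) →
    (∀ i j : Fin 4, i ≤ j → binaryValue (fun k => ![a, b, c, d] k i) ≤
      binaryValue (fun k => ![a, b, c, d] k j)) →
    (∀ i, binaryValue (![a, b, c, d] i) = ![3, 3, 12, 12] i) ∨
      (∀ i, binaryValue (![a, b, c, d] i) = ![3, 5, 10, 12] i) := by
  decide +kernel

/-- The matrix with rows `3, 3, 12, 12`. -/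
def blockMatrix : Matrix (Fin 4) (Fin 4) Bool :=
  !![false, false, true, true;
     false, false, true, true;
     true, true, false, false;
     true, true, false, false]

/-- The matrix with rows `3, 5, 10, 12`. -/
def cycleMatrix : Matrix (Fin 4) (Fin 4) Bool :=
  !![false, false, true, true;
     false, true, false, true;
     true, false, true, false;
     true, true, false, false]

theorem rowVal_blockMatrix : rowVal blockMatrix = ![3, 3, 12, 12] := by
  decide +kernel

theorem rowVal_cycleMatrix : rowVal cycleMatrix = ![3, 5, 10, 12] := by
  decide +kernel

theorem blockMatrix_mem_Lambda_and_isCanonical :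
    blockMatrix ∈ Lambda 4 2 ∧ IsCanonical blockMatrix := by
  simp only [Lambda, IsCanonical, Monotone, Set.mem_ofPred_eq]
  decide +kernel

theorem cycleMatrix_mem_Lambda_and_isCanonical :
    cycleMatrix ∈ Lambda 4 2 ∧ IsCanonical cycleMatrix := by
  simp only [Lambda, IsCanonical, Monotone, Set.mem_ofPred_eq]
  decide +kernel

theorem rowVal_eq_block_iff (A : Matrix (Fin 4) (Fin 4) Bool) :
    rowVal A = ![3, 3, 12, 12] ↔ A = blockMatrix := by
  rw [← rowVal_blockMatrix, rowVal_four_injective.eq_iff]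

theorem rowVal_eq_cycle_iff (A : Matrix (Fin 4) (Fin 4) Bool) :
    rowVal A = ![3, 5, 10, 12] ↔ A = cycleMatrix := by
  rw [← rowVal_cycleMatrix, rowVal_four_injective.eq_iff]

theorem rowVal_of_mem_Lambda_of_isCanonical {A : Matrix (Fin 4) (Fin 4) Bool}
    (hA : A ∈ Lambda 4 2) (hc : IsCanonical A) :
    rowVal A = ![3, 3, 12, 12] ∨ rowVal A = ![3, 5, 10, 12] := by
  have hrows : ![A 0, A 1, A 2, A 3] = A := by
    funext i
    fin_cases i <;> rfl
  have key := rowVal_of_nondecreasing_rows (A 0) (hA.1 0)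
    (A 1) (hA.1 1) (hc.1 (by decide : (0 : Fin 4) ≤ 1))
    (A 2) (hA.1 2) (hc.1 (by decide : (1 : Fin 4) ≤ 2))
    (A 3) (hA.1 3) (hc.1 (by decide : (2 : Fin 4) ≤ 3))
  rw [hrows] at key
  exact (key hA.2 fun _ _ hij => hc.2 hij).imp funext funext

theorem mem_Lambda_and_isCanonical_iff (A : Matrix (Fin 4) (Fin 4) Bool) :
    (A ∈ Lambda 4 2 ∧ IsCanonical A) ↔
      (rowVal A = ![3, 3, 12, 12] ∨ rowVal A = ![3, 5, 10, 12]) := by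
  refine ⟨fun h => rowVal_of_mem_Lambda_of_isCanonical h.1 h.2, ?_⟩
  rw [rowVal_eq_block_iff, rowVal_eq_cycle_iff]
  rintro (rfl | rfl)
  · exact blockMatrix_mem_Lambda_and_isCanonical
  · exact cycleMatrix_mem_Lambda_and_isCanonical

theorem canonical_Lambda_four_two :
    (∀ A : Matrix (Fin 4) (Fin 4) Bool,
      (A ∈ Lambda 4 2 ∧ IsCanonical A) ↔
        (rowVal A = ![3, 3, 12, 12] ∨ rowVal A = ![3, 5, 10, 12])) ∧
    Nat.card {A : Matrix (Fin 4) (Fin 4) Bool |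
        A ∈ Lambda 4 2 ∧ IsCanonical A} = 2 := by
  refine ⟨mem_Lambda_and_isCanonical_iff, ?_⟩
  have hset : {A : Matrix (Fin 4) (Fin 4) Bool | A ∈ Lambda 4 2 ∧ IsCanonical A} =
      {blockMatrix, cycleMatrix} := by
    ext A
    simp only [Set.mem_ofPred_eq, mem_Lambda_and_isCanonical_iff, rowVal_eq_block_iff,
      rowVal_eq_cycle_iff, Set.mem_insert_iff, Set.mem_singleton_iff]
  have hne : blockMatrix ≠ cycleMatrix := by decide
  rw [hset, Nat.card_coe_set_eq, Set.ncard_pair hne]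
end
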